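/- Let f : ℝ^N → (−∞,∞], x̄ ∈ dom f, let h : ℝ^N → ℝ be convex and differentiable, and let m : ℝ^N → (−∞,∞] be proper, closed and convex with |f(x) − m(x)| ≤ L·D_h(x, x̄) for all x ∈ ℝ^N, where L > 0. Let α > 0 and let x̂ be a global minimizer of u ↦ m(u) + (1/α)·D_h(u, x̄). Suppose ρ ≥ 0 is a Bregman symmetry factor for h, i.e. D_h(u, v) ≥ ρ·D_h(v, u) for all u, v ∈ ℝ^N. Then the descent estimate ((1 + ρ − αL)/α)·D_h(x̂, x̄) ≤ f(x̄) − f(x̂) holds; in particular, for α ∈ (0, (1+ρ)/L) the left-hand side is nonnegative. -/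

import Mathlib

open scoped RealInnerProductSpace
open Filter Topology

/-- The Bregman distance `D_h(x, u) = h x − h u − ⟨∇h u, x − u⟩` associated with `h`. -/
noncomputable def breg {N : ℕ} (h : EuclideanSpace ℝ (Fin N) → ℝ)
    (x u : EuclideanSpace ℝ (Fin N)) : ℝ :=
  h x - h u - ⟪gradient h u, x - u⟫

/-- Convexity for extended-real-valued functions. -/
def ERealConvex {N : ℕ} (f : EuclideanSpace ℝ (Fin N) → EReal) : Prop :=
  ∀ x y : EuclideanSpace ℝ (Fin N), ∀ a b : ℝ, 0 ≤ a → 0 ≤ b → a + b = 1 →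
    f (a • x + b • y) ≤ (a : EReal) * f x + (b : EReal) * f y

/-! Along the segment from the minimizer `x̂` to `x̄`, convexity of `m` bounds the growth of the model
linearly, so minimality of `x̂` forces `m x̂ ≤ m x̄ + (1/α)·(∇h(x̂) − ∇h(x̄))(x̄ − x̂)`. The Bregman
three-point identity turns the last term into `−(1/α)·(D_h(x̂, x̄) + D_h(x̄, x̂))`, to which the
symmetry factor applies; the error bound then replaces `m` by `f` at both points, at the cost of
`L·D_h(x̂, x̄)`. The two-sided error bound at `x̂` also gives `D_h(x̂, x̄) ≥ 0`. -/

section RealVectorSpace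

variable {E : Type*} [AddCommGroup E] [Module ℝ E]

/-- The Bregman distance of `h` on a real vector space. The derivative of `h` at each point is a
parameter `h'`, with no continuity imposed, so that Gateaux differentiable `h` are covered and no
norm or inner product is needed. -/
def bregmanDist (h : E → ℝ) (h' : E → Module.Dual ℝ E) (x u : E) : ℝ :=
  h x - h u - h' u (x - u)

@[simp]
lemma bregmanDist_self (h : E → ℝ) (h' : E → Module.Dual ℝ E) (u : E) :
    bregmanDist h h' u u = 0 := by
  simp [bregmanDist]

lemma bregmanDist_three_point (h : E → ℝ) (h' : E → Module.Dual ℝ E) (x y u : E) :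
    bregmanDist h h' x u + bregmanDist h h' y x + (h' x - h' u) (y - x) =
      bregmanDist h h' y u := by
  simp only [bregmanDist, LinearMap.sub_apply, map_sub]
  ring

lemma hasLineDerivAt_bregmanDist {h : E → ℝ} {x v : E} {h' : E → Module.Dual ℝ E}
    (hh : HasLineDerivAt ℝ h (h' x v) x v) (u : E) :
    HasLineDerivAt ℝ (fun z ↦ bregmanDist h h' z u) ((h' x - h' u) v) x v := by
  have hlin : HasDerivAt (fun t : ℝ ↦ h' u (x + t • v - u)) (h' u v) 0 := by
    have := ((hasDerivAt_id (0 : ℝ)).mul_const (h' u v)).const_add (h' u (x - u))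
    simpa [add_sub_right_comm] using this
  exact (HasDerivAt.sub_const (h u) hh).sub hlin

lemma le_of_hasLineDerivAt_of_forall_mul_le {φ : E → ℝ} {a c : ℝ} {x v : E}
    (hφ : HasLineDerivAt ℝ φ c x v)
    (hle : ∀ t ∈ Set.Ioo (0 : ℝ) 1, t * a ≤ φ (x + t • v) - φ x) : a ≤ c := by
  refine ge_of_tendsto hφ.tendsto_slope_zero_right ?_
  filter_upwards [Ioo_mem_nhdsGT one_pos] with t ht
  rw [smul_eq_mul, le_inv_mul_iff₀ ht.1]
  exact hle t ht

lemma mul_sub_le_sub_of_forall_add_le {m : E → EReal} {φ : E → ℝ} {x y : E} {M B t : ℝ}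
    (hmconv : ∀ a b : ℝ, 0 ≤ a → 0 ≤ b → a + b = 1 → m (a • x + b • y) ≤ a * m x + b * m y)
    (hmin : ∀ u, m x + φ x ≤ m u + φ u) (hx : m x = M) (hy : m y ≤ B)
    (ht : t ∈ Set.Ioo (0 : ℝ) 1) : t * (M - B) ≤ φ (x + t • (y - x)) - φ x := by
  have hseg : (1 - t) • x + t • y = x + t • (y - x) := by module
  have hconv : m (x + t • (y - x)) ≤ ((1 - t : ℝ) : EReal) * M + t * B :=
    calc m (x + t • (y - x)) ≤ ((1 - t : ℝ) : EReal) * M + t * m y := by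
          rw [← hseg, ← hx]
          exact hmconv (1 - t) t (sub_nonneg.2 ht.2.le) ht.1.le (sub_add_cancel 1 t)
      _ ≤ ((1 - t : ℝ) : EReal) * M + t * B := by
          have := mul_le_mul_of_nonneg_left hy (EReal.coe_nonneg.2 ht.1.le)
          gcongr
  have hle := (hmin (x + t • (y - x))).trans (add_le_add_left hconv _)
  rw [hx] at hle
  have : M + φ x ≤ (1 - t) * M + t * B + φ (x + t • (y - x)) := by exact_mod_cast hle
  linarith

lemma le_add_lineDeriv_of_forall_add_le {m : E → EReal} {φ : E → ℝ} {c : ℝ} {x y : E}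
    (hmconv : ∀ a b : ℝ, 0 ≤ a → 0 ≤ b → a + b = 1 → m (a • x + b • y) ≤ a * m x + b * m y)
    (hφ : HasLineDerivAt ℝ φ c x (y - x)) (hmin : ∀ u, m x + φ x ≤ m u + φ u) :
    m x ≤ m y + c := by
  refine (EReal.sub_le_iff_le_add (.inl (EReal.coe_ne_bot c)) (.inl (EReal.coe_ne_top c))).1 ?_
  refine EReal.le_of_forall_lt_iff_le.1 fun B hB ↦ ?_
  induction hM : m x with
  | bot => simp
  | top =>
    have hlt : m y + φ y < ⊤ := EReal.add_lt_top hB.ne_top (EReal.coe_ne_top _)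
    have hle := hmin y
    rw [hM, EReal.top_add_coe] at hle
    exact absurd hlt hle.not_gt
  | coe M =>
    have := le_of_hasLineDerivAt_of_forall_mul_le hφ fun t ↦
      mul_sub_le_sub_of_forall_add_le hmconv hmin hM hB.le
    exact_mod_cast (by linarith : M - c ≤ B)

/-- The Chen–Teboulle inequality for Bregman proximal points. -/
lemma prox_three_point_le {m : E → EReal} {h : E → ℝ}
    {h' : E → Module.Dual ℝ E} {κ : ℝ} {x y u : E}
    (hmconv : ∀ a b : ℝ, 0 ≤ a → 0 ≤ b → a + b = 1 → m (a • x + b • y) ≤ a * m x + b * m y)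
    (hh : HasLineDerivAt ℝ h (h' x (y - x)) x (y - x))
    (hmin : ∀ z, m x + ((κ * bregmanDist h h' x u : ℝ) : EReal) ≤
      m z + ((κ * bregmanDist h h' z u : ℝ) : EReal)) :
    m x + ((κ * (bregmanDist h h' x u + bregmanDist h h' y x) : ℝ) : EReal) ≤
      m y + ((κ * bregmanDist h h' y u : ℝ) : EReal) := by
  have hφ : HasLineDerivAt ℝ (fun z ↦ κ * bregmanDist h h' z u)
      (κ * (h' x - h' u) (y - x)) x (y - x) :=
    HasDerivAt.const_mul κ (hasLineDerivAt_bregmanDist hh u)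
  have hfirst := le_add_lineDeriv_of_forall_add_le hmconv hφ hmin
  rw [← bregmanDist_three_point h h' x y u, mul_add κ _ ((h' x - h' u) (y - x)), EReal.coe_add,
    add_left_comm, add_comm (m x)]
  exact add_le_add_right hfirst _

lemma bregmanDist_add_le_of_model_bounds {f m : E → EReal} {h : E → ℝ} {h' : E → Module.Dual ℝ E}
    {L α ρ : ℝ} {xb xh : E} (hα : 0 < α)
    (hmconv : ∀ a b : ℝ, 0 ≤ a → 0 ≤ b → a + b = 1 → m (a • xh + b • xb) ≤ a * m xh + b * m xb)
    (hh : HasLineDerivAt ℝ h (h' xh (xb - xh)) xh (xb - xh))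
    (hmin : ∀ z, m xh + (((1 / α) * bregmanDist h h' xh xb : ℝ) : EReal) ≤
      m z + (((1 / α) * bregmanDist h h' z xb : ℝ) : EReal))
    (hsym : ρ * bregmanDist h h' xh xb ≤ bregmanDist h h' xb xh)
    (hlower : m xb ≤ f xb)
    (hupper : f xh ≤ ((L * bregmanDist h h' xh xb : ℝ) : EReal) + m xh) :
    ((((1 + ρ - α * L) / α) * bregmanDist h h' xh xb : ℝ) : EReal) + f xh ≤ f xb := by
  have hprox := prox_three_point_le hmconv hh hmin
  rw [bregmanDist_self, mul_zero, EReal.coe_zero, add_zero] at hprox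
  set D := bregmanDist h h' xh xb
  set D' := bregmanDist h h' xb xh
  have hcoef : (1 + ρ - α * L) / α * D + L * D ≤ 1 / α * (D + D') :=
    calc (1 + ρ - α * L) / α * D + L * D = 1 / α * (D + ρ * D) := by field_simp; ring
      _ ≤ 1 / α * (D + D') := by gcongr
  calc (((1 + ρ - α * L) / α * D : ℝ) : EReal) + f xh
      ≤ (((1 + ρ - α * L) / α * D : ℝ) : EReal) + (((L * D : ℝ) : EReal) + m xh) := by gcongr
    _ = m xh + (((1 + ρ - α * L) / α * D + L * D : ℝ) : EReal) := by
      rw [← add_assoc, ← EReal.coe_add, add_comm]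
    _ ≤ m xh + ((1 / α * (D + D') : ℝ) : EReal) := by gcongr
    _ ≤ m xb := hprox
    _ ≤ f xb := hlower

end RealVectorSpace

lemma le_coe_add_of_sub_le_coe {a b : EReal} {c : ℝ} (hab : a - b ≤ c) : a ≤ c + b :=
  (EReal.sub_le_iff_le_add (.inr (EReal.coe_ne_top c)) (.inr (EReal.coe_ne_bot c))).1 hab

lemma nonneg_of_sub_le_coe_of_sub_le_coe {a b : EReal} {c : ℝ} (hbot : a ≠ ⊥) (htop : a ≠ ⊤)
    (hab : a - b ≤ c) (hba : b - a ≤ c) : 0 ≤ c := by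
  lift a to ℝ using ⟨htop, hbot⟩
  have hle : (a : EReal) ≤ c + (c + a) :=
    (le_coe_add_of_sub_le_coe hab).trans (by gcongr; exact le_coe_add_of_sub_le_coe hba)
  norm_cast at hle
  linarith

theorem descent_property_global_model_exact_general {E : Type*} [AddCommGroup E] [Module ℝ E]
    (f : E → EReal) (xb : E) (hxb : f xb ≠ ⊤)
    (h : E → ℝ) (h' : E → Module.Dual ℝ E) (hh : ∀ u v, HasLineDerivAt ℝ h (h' u v) u v)
    (m : E → EReal) (L : ℝ) (hL : 0 < L)
    (hmodel : ∀ z, f z - m z ≤ ((L * bregmanDist h h' z xb : ℝ) : EReal) ∧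
                   m z - f z ≤ ((L * bregmanDist h h' z xb : ℝ) : EReal))
    (α : ℝ) (hα : 0 < α) (xh : E) (hfbot : f xh ≠ ⊥)
    (hmconv : ∀ a b : ℝ, 0 ≤ a → 0 ≤ b → a + b = 1 → m (a • xh + b • xb) ≤ a * m xh + b * m xb)
    (hmin : ∀ u, m xh + (((1 / α) * bregmanDist h h' xh xb : ℝ) : EReal) ≤
                 m u + (((1 / α) * bregmanDist h h' u xb : ℝ) : EReal))
    (ρ : ℝ) (hsym : ρ * bregmanDist h h' xh xb ≤ bregmanDist h h' xb xh) :
    ((((1 + ρ - α * L) / α) * bregmanDist h h' xh xb : ℝ) : EReal) ≤ f xb - f xh ∧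
      (α < (1 + ρ) / L → 0 ≤ ((1 + ρ - α * L) / α) * bregmanDist h h' xh xb) := by
  have hlower : m xb ≤ f xb := EReal.sub_nonpos.1 (by simpa using (hmodel xb).2)
  have hdescent := bregmanDist_add_le_of_model_bounds hα hmconv (hh xh _) hmin hsym hlower
    (le_coe_add_of_sub_le_coe (hmodel xh).1)
  have hftop : f xh ≠ ⊤ := by
    intro htop
    rw [htop, EReal.coe_add_top] at hdescent
    exact hxb (top_le_iff.1 hdescent)
  refine ⟨(EReal.le_sub_iff_add_le (.inl hfbot) (.inl hftop)).2 hdescent, fun hlt ↦ ?_⟩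
  have hD : 0 ≤ bregmanDist h h' xh xb := nonneg_of_mul_nonneg_right
    (nonneg_of_sub_le_coe_of_sub_le_coe hfbot hftop (hmodel xh).1 (hmodel xh).2) hL
  have hcoef : α * L < 1 + ρ := (lt_div_iff₀ hL).1 hlt
  exact mul_nonneg (div_nonneg (sub_nonneg.2 hcoef.le) hα.le) hD

/-- **Descent property under a global model error bound (exact proximal points).** If
`|f − m| ≤ L·D_h(·, x̄)`, `x̂` globally minimizes `u ↦ m u + (1/α)·D_h(u, x̄)`, and `ρ ≥ 0`
is a Bregman symmetry factor for `h` (i.e. `D_h(u,v) ≥ ρ·D_h(v,u)`), then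
`((1 + ρ − αL)/α)·D_h(x̂, x̄) ≤ f x̄ − f x̂`; in particular the left-hand side is
nonnegative for `α ∈ (0, (1+ρ)/L)`. -/
theorem descent_property_global_model_exact (N : ℕ)
    (f : EuclideanSpace ℝ (Fin N) → EReal) (hfbot : ∀ z, f z ≠ ⊥)
    (xb : EuclideanSpace ℝ (Fin N)) (hxb : f xb ≠ ⊤)
    (h : EuclideanSpace ℝ (Fin N) → ℝ)
    (hhconv : ConvexOn ℝ Set.univ h) (hhdiff : Differentiable ℝ h)
    (m : EuclideanSpace ℝ (Fin N) → EReal)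
    (hmbot : ∀ z, m z ≠ ⊥) (hmproper : ∃ z, m z ≠ ⊤)
    (hmclosed : LowerSemicontinuous m) (hmconv : ERealConvex m)
    (L : ℝ) (hL : 0 < L)
    (hmodel : ∀ z, f z - m z ≤ ((L * breg h z xb : ℝ) : EReal) ∧
                   m z - f z ≤ ((L * breg h z xb : ℝ) : EReal))
    (α : ℝ) (hα : 0 < α)
    (xh : EuclideanSpace ℝ (Fin N))
    (hmin : ∀ u, m xh + (((1/α) * breg h xh xb : ℝ) : EReal) ≤
                 m u + (((1/α) * breg h u xb : ℝ) : EReal))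
    (ρ : ℝ) (hρ : 0 ≤ ρ)
    (hsym : ∀ u v, ρ * breg h v u ≤ breg h u v) :
    ((((1 + ρ - α * L) / α) * breg h xh xb : ℝ) : EReal) ≤ f xb - f xh ∧
      (α < (1 + ρ) / L → 0 ≤ ((1 + ρ - α * L) / α) * breg h xh xb) := by
  exact descent_property_global_model_exact_general f xb hxb h (fun u ↦ innerₗ _ (gradient h u))
    (fun u v ↦ (hhdiff u).hasGradientAt.hasFDerivAt.hasLineDerivAt v) m L hL hmodel α hα xh
    (hfbot xh) (hmconv xh xb) hmin ρ (hsym xb xh)
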